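/- arXiv:1907.04400 — 7 statements merged into one kernel-verified Lean document; each statement's English description precedes it below -/
import Mathlib

section
/- Let v_i and v_{i'} be the values of two ads of the same type θ with v_i > v_{i'}, and let α_j and α_{j'} be the discounts of type θ for two slots j < j' with α_j > α_{j'}. Suppose real dual variables u_i, u_{i'}, p_j, p_{j'} satisfy the dual feasibility constraints u_i + p_j ≥ α_j · v_i and u_{i'} + p_{j'} ≥ α_{j'} · v_{i'}. Then it cannot hold simultaneously that the edge from ad i to slot j' is tight (u_i + p_{j'} = α_{j'} · v_i) and the edge from ad i' to slot j is tight (u_{i'} + p_j = α_j · v_{i'}). (Non-crossing lemma.) -/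
/-!
The edges `(i, j)`, `(i', j')` and the crossed edges `(i, j')`, `(i', j)` cover the same ads and
slots, so both pairs have the same total dual sum. That sum bounds the value of the uncrossed
pair, which by the rearrangement inequality strictly exceeds the value of the crossed pair; hence
the crossed edges have positive total slack.
-/

theorem crossed_values_lt_crossed_duals {M : Type*} [AddCommSemigroup M] [Preorder M]
    [AddLeftMono M] {wij wij' wi'j wi'j' ui ui' pj pj' : M}
    (hw : wij' + wi'j < wij + wi'j') (hfeas : wij ≤ ui + pj) (hfeas' : wi'j' ≤ ui' + pj') :
    wij' + wi'j < (ui + pj') + (ui' + pj) :=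
  calc
    wij' + wi'j < wij + wi'j' := hw
    _ ≤ (ui + pj) + (ui' + pj') := add_le_add hfeas hfeas'
    _ = (ui + pj') + (ui' + pj) := by ac_rfl

theorem non_crossing_general {R : Type*} [Semiring R] [PartialOrder R] [IsStrictOrderedRing R]
    [ExistsAddOfLE R] {vi vi' αj αj' ui ui' pj pj' : R} (hv : vi' < vi) (hα : αj' < αj)
    (hfeas : αj * vi ≤ ui + pj) (hfeas' : αj' * vi' ≤ ui' + pj') :
    αj' * vi + αj * vi' < (ui + pj') + (ui' + pj) := by
  have rearrangement : αj' * vi + αj * vi' < αj * vi + αj' * vi' :=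
    (mul_add_mul_lt_mul_add_mul hα hv).trans_eq (add_comm _ _)
  exact crossed_values_lt_crossed_duals rearrangement hfeas hfeas'

/-- **Non-crossing lemma.** For two ads of the same type with values `vi > vi'` and two slots
`j < j'` with discounts `αj > αj'`, if the dual solution satisfies the feasibility constraints
`ui + pj ≥ αj * vi` and `ui' + pj' ≥ αj' * vi'`, then the edges `(i, j')` and `(i', j)` cannot
both be tight. -/
theorem non_crossing
    (vi vi' αj αj' ui ui' pj pj' : ℝ)
    (hv : vi > vi') (hα : αj > αj')
    (hfeas₁ : ui + pj ≥ αj * vi)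
    (hfeas₂ : ui' + pj' ≥ αj' * vi') :
    ¬ (ui + pj' = αj' * vi ∧ ui' + pj = αj * vi') :=
  fun ⟨htight, htight'⟩ =>
    (non_crossing_general hv hα hfeas₁ hfeas₂).ne (congrArg₂ (· + ·) htight htight').symm
end

section
/- Let A and B be finite sets with |A| = |B| = m, let W : A × B → ℝ be strictly positive edge weights where B is identified with slots indexed 1, …, m, and let v* = 1 + max_{a,j} W(a, j). Define modified weights W'(a, j) = W(a, j) + (m − j) · v*. Then: (i) for every a ∈ A the modified weights are strictly decreasing along the slot order, i.e., W'(a, j) > W'(a, j+1) for all 1 ≤ j < m; and (ii) a perfect matching maximizes total W'-weight if and only if it maximizes total W-weight. Hence every instance of the assignment problem with positive weights is equivalent to an instance in which all m ads agree on the order of the slots with monotonically decreasing values, i.e., an Ad Types instance with k = n ad types. -/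
open Finset

section Matching

variable {A B R : Type*} [Fintype A]

/-- A maximum-weight perfect matching of the complete bipartite graph on `A` and `B` with edge
weights `W`; perfect matchings are encoded as equivalences `A ≃ B`. -/
def IsMaxWeightMatching [AddCommMonoid R] [LE R] (W : A → B → R) (π : A ≃ B) : Prop :=
  ∀ σ : A ≃ B, ∑ a, W a (σ a) ≤ ∑ a, W a (π a)

theorem sum_add_apply_equiv [AddCommMonoid R] [Fintype B] (W : A → B → R) (c : B → R)
    (σ : A ≃ B) : ∑ a, (W a (σ a) + c (σ a)) = ∑ a, W a (σ a) + ∑ b, c b := by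
  rw [sum_add_distrib, Equiv.sum_comp σ c]

theorem isMaxWeightMatching_add_iff [AddCommMonoid R] [PartialOrder R]
    [IsOrderedCancelAddMonoid R] [Finite B] (W : A → B → R) (c : B → R) (π : A ≃ B) :
    IsMaxWeightMatching (fun a b => W a b + c b) π ↔ IsMaxWeightMatching W π := by
  have := Fintype.ofFinite B
  simp only [IsMaxWeightMatching, sum_add_apply_equiv, add_le_add_iff_right]

end Matching

section SlotOrder

variable {R : Type*} [Ring R] [PartialOrder R] [IsOrderedRing R]

theorem strictAnti_add_mul_of_lt_add {ι : Type*} [Preorder ι] {f r : ι → R} {v : R}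
    (hf : ∀ i j, f j < f i + v) (hr : ∀ i j, i < j → r j + 1 ≤ r i) :
    StrictAnti fun i => f i + r i * v := by
  intro i j hij
  have hv : 0 ≤ v := (pos_of_lt_add_right (hf i i)).le
  calc f j + r j * v < f i + v + r j * v := by gcongr; exact hf i j
    _ = f i + (r j + 1) * v := by noncomm_ring
    _ ≤ f i + r i * v := by gcongr; exact hr i j hij

theorem sub_val_succ_add_one_le {m : ℕ} {i j : Fin m} (hij : i < j) :
    (m : R) - ((j : ℕ) + 1) + 1 ≤ (m : R) - ((i : ℕ) + 1) := by
  have hsucc : ((i : ℕ) : R) + 1 ≤ (j : ℕ) := by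
    simpa only [Nat.cast_succ] using Nat.mono_cast (α := R) (Nat.succ_le_of_lt hij)
  rw [sub_add_eq_sub_sub, sub_add_cancel]
  gcongr

end SlotOrder

theorem le_ciSup_ciSup_of_finite {ι κ α : Type*} [Finite ι] [Finite κ]
    [ConditionallyCompleteLattice α] (f : ι → κ → α) (i : ι) (k : κ) :
    f i k ≤ ⨆ i, ⨆ k, f i k :=
  (Finite.le_ciSup (f i) k).trans (Finite.le_ciSup (fun i => ⨆ k, f i k) i)

theorem assignment_reduces_to_ad_types_general
    {A R : Type*} [Fintype A] [Ring R] [PartialOrder R] [IsOrderedRing R] {m : ℕ}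
    (W : A → Fin m → R) (v : R) (hv : ∀ a j j', W a j' < W a j + v)
    (W' : A → Fin m → R)
    (hW' : ∀ a (j : Fin m), W' a j = W a j + ((m : R) - ((j : ℕ) + 1)) * v) :
    (∀ a, StrictAnti (W' a)) ∧
    (∀ π : A ≃ Fin m, IsMaxWeightMatching W' π ↔ IsMaxWeightMatching W π) := by
  obtain rfl : W' = fun a j => W a j + ((m : R) - ((j : ℕ) + 1)) * v := funext₂ hW'
  exact ⟨fun a => strictAnti_add_mul_of_lt_add (hv a) fun _ _ => sub_val_succ_add_one_le,
    isMaxWeightMatching_add_iff W _⟩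

/-- Reduction of the assignment problem with positive weights to an Ad Types instance with
`k = n` ad types: with `v* = 1 + max W` and modified weights `W'(a, j) = W(a, j) + (m − j)·v*`
(slots indexed `1, …, m`), (i) the modified weights of every ad are strictly decreasing along
the slot order, and (ii) a perfect matching maximizes total `W'`-weight iff it maximizes total
`W`-weight. -/
theorem assignment_reduces_to_ad_types
    {A : Type*} [Fintype A] [Nonempty A] (m : ℕ) (hA : Fintype.card A = m)
    (W : A → Fin m → ℝ) (hpos : ∀ a j, 0 < W a j)
    (vstar : ℝ) (hvstar : vstar = 1 + ⨆ a, ⨆ j, W a j)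
    (W' : A → Fin m → ℝ)
    (hW' : ∀ a (j : Fin m), W' a j = W a j + ((m : ℝ) - ((j : ℕ) + 1)) * vstar) :
    (∀ a : A, ∀ j j' : Fin m, j < j' → W' a j' < W' a j) ∧
    (∀ π : A ≃ Fin m,
      (∀ σ : A ≃ Fin m, ∑ a, W' a (σ a) ≤ ∑ a, W' a (π a)) ↔
      (∀ σ : A ≃ Fin m, ∑ a, W a (σ a) ≤ ∑ a, W a (π a))) :=
  have hv (a : A) (j j' : Fin m) : W a j' < W a j + vstar := by
    linarith [hpos a j, le_ciSup_ciSup_of_finite W a j']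
  have ⟨hanti, hmax⟩ := assignment_reduces_to_ad_types_general W vstar hv W' hW'
  ⟨fun a _ _ hlt => hanti a hlt, hmax⟩
end

section
/- Let H be a finite simple graph on vertex set V with |V| = k, and consider the Ad Types instance constructed from H: there are k slots, one ad per vertex (each vertex being its own ad type), all value-per-conversion values equal to 1, all discounts equal to 1, and gap matrix G with G_{uw} = k if {u, w} is an edge of H and G_{uw} = 0 otherwise. Then the maximum total value of a feasible allocation of this instance (which equals the maximum number of allocated ads, since every allocated ad contributes value 1) equals the independence number of H, i.e., the maximum size of an independent set of H. -/
section GapRules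

variable {α : Type*} {n : ℕ} {G : α → α → ℕ} {S : Set α} {σ : α → Fin n}

/-- The gap rules of the Ad Types problem when every ad is its own type: if the ads `u` and `w`
of `S` are placed in the slots `σ u < σ w`, then `σ w - σ u > G u w`. Slots are numbered from `0`,
the values of `σ` outside `S` are irrelevant, and the truncated subtraction is only evaluated where
it is exact. That the ads of `S` get distinct slots is a separate condition, `S.InjOn σ`. -/
def ObeysGapRules (G : α → α → ℕ) (S : Set α) (σ : α → Fin n) : Prop :=
  ∀ u ∈ S, ∀ w ∈ S, σ u < σ w → G u w < (σ w : ℕ) - (σ u : ℕ)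

namespace ObeysGapRules

theorem gap_add_one_lt (h : ObeysGapRules G S σ) {u w : α} (hu : u ∈ S) (hw : w ∈ S)
    (hlt : σ u < σ w) : G u w + 1 < n := by
  calc
    G u w + 1 ≤ (σ w : ℕ) - (σ u : ℕ) := h u hu w hw hlt
    _ ≤ (σ w : ℕ) := Nat.sub_le _ _
    _ < n := (σ w).isLt

theorem of_pairwise_eq_zero (h : S.Pairwise fun u w ↦ G u w = 0) : ObeysGapRules G S σ := by
  intro u hu w hw hlt
  have hzero : G u w = 0 := h hu hw (ne_of_apply_ne σ hlt.ne)
  rw [hzero]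
  exact Nat.sub_pos_of_lt hlt

variable {H : SimpleGraph α}

theorem isIndepSet (h : ObeysGapRules G S σ) (hσ : S.InjOn σ)
    (hadj : ∀ u w, H.Adj u w → n ≤ G u w + 1) : H.IsIndepSet S := by
  intro u hu w hw hne huw
  rcases (hσ.ne hu hw hne).lt_or_gt with hlt | hgt
  · exact (h.gap_add_one_lt hu hw hlt).not_ge (hadj u w huw)
  · exact (h.gap_add_one_lt hw hu hgt).not_ge (hadj w u huw.symm)

theorem of_isIndepSet (hS : H.IsIndepSet S)
    (hnonadj : ∀ u w, u ≠ w → ¬ H.Adj u w → G u w = 0) : ObeysGapRules G S σ :=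
  of_pairwise_eq_zero fun u hu w hw hne ↦ hnonadj u w hne (hS hu hw hne)

end ObeysGapRules

theorem exists_injOn_obeysGapRules_iff {H : SimpleGraph α}
    (hadj : ∀ u w, H.Adj u w → n ≤ G u w + 1)
    (hnonadj : ∀ u w, u ≠ w → ¬ H.Adj u w → G u w = 0) :
    (∃ σ : α → Fin n, S.InjOn σ ∧ ObeysGapRules G S σ) ↔
      H.IsIndepSet S ∧ ∃ σ : α → Fin n, S.InjOn σ := by
  constructor
  · rintro ⟨σ, hσ, hgap⟩
    exact ⟨hgap.isIndepSet hσ hadj, σ, hσ⟩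
  · rintro ⟨hS, σ, hσ⟩
    exact ⟨σ, hσ, .of_isIndepSet hS hnonadj⟩

theorem isIndepSet_iff_forall_not_adj {H : SimpleGraph α} :
    H.IsIndepSet S ↔ ∀ u ∈ S, ∀ w ∈ S, ¬ H.Adj u w :=
  ⟨fun h _ hu _ hw huw ↦ h hu hw huw.ne huw, fun h u hu w hw _ ↦ h u hu w hw⟩

theorem max_allocation_value_eq_independence_number_general {H : SimpleGraph α}
    (hadj : ∀ u w, H.Adj u w → n ≤ G u w + 1)
    (hnonadj : ∀ u w, u ≠ w → ¬ H.Adj u w → G u w = 0)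
    (hslots : ∀ S : Finset α, H.IsIndepSet S → ∃ σ : α → Fin n, Set.InjOn σ ↑S) (N : ℕ) :
    IsGreatest {m : ℕ | ∃ (S : Finset α) (σ : α → Fin n),
        Set.InjOn σ ↑S ∧ ObeysGapRules G S σ ∧ S.card = m} N ↔
    IsGreatest {m : ℕ | ∃ S : Finset α, H.IsIndepSet S ∧ S.card = m} N := by
  have feasible_iff (S : Finset α) :
      (∃ σ : α → Fin n, Set.InjOn σ ↑S ∧ ObeysGapRules G S σ) ↔ H.IsIndepSet S :=
    (exists_injOn_obeysGapRules_iff hadj hnonadj).trans (and_iff_left_of_imp (hslots S))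
  simp only [← and_assoc, exists_and_right, feasible_iff]

end GapRules

/-- In the Ad Types instance built from a graph `H` on `k` vertices (`k` slots, one ad per
vertex, all values and discounts equal to `1`, gap `G u w = k` if `{u,w} ∈ E(H)` and `0`
otherwise), the maximum total value of a feasible allocation — which equals the maximum
number `|S|` of allocated ads — equals the independence number of `H`. -/
theorem max_allocation_value_eq_independence_number
    {V : Type*} [Fintype V] (H : SimpleGraph V) [DecidableRel H.Adj]
    (k : ℕ) (hk : Fintype.card V = k)
    (G : V → V → ℕ) (hG : ∀ u w, G u w = if H.Adj u w then k else 0)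
    (N : ℕ) :
    IsGreatest {m : ℕ | ∃ (S : Finset V) (σ : V → Fin k),
        Set.InjOn σ ↑S ∧
        (∀ u ∈ S, ∀ w ∈ S, σ u < σ w → G u w < (σ w : ℕ) - (σ u : ℕ)) ∧
        S.card = m} N ↔
    IsGreatest {m : ℕ | ∃ S : Finset V,
        (∀ u ∈ S, ∀ w ∈ S, ¬ H.Adj u w) ∧ S.card = m} N := by
  simpa only [ObeysGapRules, isIndepSet_iff_forall_not_adj, Finset.mem_coe] using
    max_allocation_value_eq_independence_number_general (G := G) (H := H)
      (by simp +contextual [hG]) (by simp +contextual [hG])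
      (fun _ _ ↦ ⟨Fintype.equivFinOfCardEq hk, (Equiv.injective _).injOn⟩) N
end

section
/- Let U (ads) and V (slots) be finite sets with nonnegative edge weights v_{ij}, let OPT denote the maximum weight of a matching, and for an ad i let OPT_{−i} denote the maximum weight of a matching that does not use ad i. Let (u, p) be a feasible dual solution whose value equals OPT (an optimal dual solution). Then for every ad i and every slot j, p_j ≥ v_{ij} − (OPT − OPT_{−i}). In particular, for a pair (i, j) matched in a maximum weight matching, the right-hand side is the VCG price of slot j, so the VCG prices are pointwise lower bounds on the slot prices of every optimal dual solution. -/
open Finset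

/-- A matching in the complete bipartite graph between ads `U` and slots `V`: a set of
ad–slot pairs in which each ad and each slot appears at most once. -/
def IsMatching {U V : Type*} (M : Finset (U × V)) : Prop :=
  ∀ e ∈ M, ∀ e' ∈ M, (e.1 = e'.1 ∨ e.2 = e'.2) → e = e'

/-!
Deleting ad `i` from an optimal dual solution `(u, p)` leaves a feasible dual solution of the
remaining market, of value `OPT - u i`. Weak duality there gives `OPTi ≤ OPT - u i`: the utility
`u i` is at most the marginal contribution `OPT - OPTi` of the ad. Feasibility `v i j ≤ u i + p j`
turns this upper bound on `u i` into the lower bound on `p j`.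
-/

/-- A feasible dual solution of the assignment problem with edge weights `v`: ad utilities `u` and
slot prices `p`, all nonnegative, which together cover the weight of every edge. -/
structure IsDualFeasible {U V R : Type*} [Add R] [Zero R] [LE R]
    (v : U → V → R) (u : U → R) (p : V → R) : Prop where
  ad_nonneg : ∀ i, 0 ≤ u i
  slot_nonneg : ∀ j, 0 ≤ p j
  le_add : ∀ i j, v i j ≤ u i + p j

theorem IsMatching.injOn_fst {U V : Type*} {M : Finset (U × V)} (hM : IsMatching M) :
    Set.InjOn Prod.fst (M : Set (U × V)) :=
  fun e he e' he' h => hM e he e' he' (Or.inl h)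

theorem IsMatching.injOn_snd {U V : Type*} {M : Finset (U × V)} (hM : IsMatching M) :
    Set.InjOn Prod.snd (M : Set (U × V)) :=
  fun e he e' he' h => hM e he e' he' (Or.inr h)

section WeakDuality

variable {R : Type*} [AddCommMonoid R] [PartialOrder R] [IsOrderedAddMonoid R]

theorem sum_comp_le_sum_of_injOn {ι κ : Type*} {s : Finset ι} {t : Finset κ} {g : ι → κ}
    {f : κ → R} (hg : Set.InjOn g s) (hst : Set.MapsTo g s t) (hf : ∀ k ∈ t, 0 ≤ f k) :
    ∑ i ∈ s, f (g i) ≤ ∑ k ∈ t, f k := by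
  classical
  rw [← sum_image (f := f) hg]
  exact sum_le_sum_of_subset_of_nonneg (image_subset_iff.2 hst) fun k hk _ => hf k hk

theorem IsMatching.sum_weight_le_sum_dual {U V : Type*} {M : Finset (U × V)} {S : Finset U}
    {T : Finset V} {v : U → V → R} {u : U → R} {p : V → R} (hM : IsMatching M)
    (hS : ∀ e ∈ M, e.1 ∈ S) (hT : ∀ e ∈ M, e.2 ∈ T) (hd : IsDualFeasible v u p) :
    ∑ e ∈ M, v e.1 e.2 ≤ ∑ i ∈ S, u i + ∑ j ∈ T, p j :=
  calc ∑ e ∈ M, v e.1 e.2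
    _ ≤ ∑ e ∈ M, (u e.1 + p e.2) := sum_le_sum fun e _ => hd.le_add e.1 e.2
    _ = ∑ e ∈ M, u e.1 + ∑ e ∈ M, p e.2 := sum_add_distrib
    _ ≤ ∑ i ∈ S, u i + ∑ j ∈ T, p j :=
      add_le_add (sum_comp_le_sum_of_injOn hM.injOn_fst hS fun i _ => hd.ad_nonneg i)
        (sum_comp_le_sum_of_injOn hM.injOn_snd hT fun j _ => hd.slot_nonneg j)

end WeakDuality

section MarginalContribution

variable {U V R : Type*} [Fintype U] [Fintype V]
  [AddCommGroup R] [PartialOrder R] [IsOrderedAddMonoid R]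
  {v : U → V → R} {u : U → R} {p : V → R} {i : U} {M : Finset (U × V)}

theorem IsDualFeasible.utility_le_sum_dual_sub_sum_weight (hd : IsDualFeasible v u p)
    (hM : IsMatching M) (hi : ∀ e ∈ M, e.1 ≠ i) :
    u i ≤ ∑ i', u i' + ∑ j, p j - ∑ e ∈ M, v e.1 e.2 := by
  classical
  have weak_duality : ∑ e ∈ M, v e.1 e.2 ≤ ∑ i' ∈ univ.erase i, u i' + ∑ j, p j :=
    hM.sum_weight_le_sum_dual (fun e he => mem_erase.2 ⟨hi e he, mem_univ _⟩)
      (fun e _ => mem_univ e.2) hd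
  rw [le_sub_iff_add_le, ← add_sum_erase univ u (mem_univ i), add_assoc]
  gcongr

theorem vcg_prices_are_lowest_dual_prices_general (hd : IsDualFeasible v u p)
    (hM : IsMatching M) (hi : ∀ e ∈ M, e.1 ≠ i) (j : V) :
    v i j - (∑ i', u i' + ∑ j', p j' - ∑ e ∈ M, v e.1 e.2) ≤ p j :=
  calc v i j - (∑ i', u i' + ∑ j', p j' - ∑ e ∈ M, v e.1 e.2)
    _ ≤ v i j - u i := sub_le_sub_left (hd.utility_le_sum_dual_sub_sum_weight hM hi) _
    _ ≤ p j := sub_le_iff_le_add'.2 (hd.le_add i j)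

end MarginalContribution

/-- **VCG prices lower-bound optimal dual slot prices.** Let `OPT` be the maximum weight of a
matching and `OPTi` the maximum weight of a matching not using ad `i`. If `(u, p)` is a
feasible dual solution whose value equals `OPT`, then `p j ≥ v i j − (OPT − OPTi)` for every
ad `i` and slot `j`; for a pair `(i, j)` matched in a maximum weight matching the right-hand
side is the VCG price of slot `j`. -/
theorem vcg_prices_are_lowest_dual_prices
    {U V : Type*} [Fintype U] [Fintype V]
    (v : U → V → ℝ) (hv : ∀ i j, 0 ≤ v i j)
    (i : U) (OPT OPTi : ℝ)
    (hOPT : IsGreatest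
      {w : ℝ | ∃ M : Finset (U × V), IsMatching M ∧ ∑ e ∈ M, v e.1 e.2 = w} OPT)
    (hOPTi : IsGreatest
      {w : ℝ | ∃ M : Finset (U × V), IsMatching M ∧ (∀ e ∈ M, e.1 ≠ i) ∧
        ∑ e ∈ M, v e.1 e.2 = w} OPTi)
    (u : U → ℝ) (p : V → ℝ)
    (hu : ∀ i', 0 ≤ u i') (hp : ∀ j, 0 ≤ p j)
    (hfeas : ∀ i' j, v i' j ≤ u i' + p j)
    (hval : ∑ i', u i' + ∑ j, p j = OPT) :
    ∀ j : V, v i j - (OPT - OPTi) ≤ p j := by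
  obtain ⟨M, hM, hi, rfl⟩ := hOPTi.1
  exact hval ▸ vcg_prices_are_lowest_dual_prices_general ⟨hu, hp, hfeas⟩ hM hi
end

section
/- In the single-parameter environment with reserve prices and the payment rule of Algorithm 3, truthful bidding is dominant: fix the other agents' bids b_{−i}, the reserves r, and an agent i with true per-unit value v_i. For any choice of welfare-maximizing outcomes (ω_v for bids (v_i, b_{−i}), ω_b for bids (b_i, b_{−i}), and ω' for bids (r_i, b_{−i}), each restricted to the respective sets of accepted bidders), the utility of agent i when bidding v_i is at least her utility when bidding any other amount b_i. -/
open Finset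

/-- The welfare of outcome `ω` for bid profile `b` with reserves `r`: the sum of `b j * x j ω`
over the accepted agents, i.e. those with `b j ≥ r j`. -/
noncomputable def welfare {Ω : Type*} [Fintype Ω] {n : ℕ}
    (x : Fin n → Ω → ℝ) (r b : Fin n → ℝ) (ω : Ω) : ℝ :=
  ∑ j, if r j ≤ b j then b j * x j ω else 0

/-- The payment charged by Algorithm 3 to an accepted agent `i`, where `ω` is the selected
welfare-maximizing outcome for the submitted bids `b` and `ω'` is a welfare-maximizing outcome
for the profile in which `b i` is replaced by the reserve `r i`:
`p_i = Σ_{j ∈ B', j ≠ i} b j x j ω' − Σ_{j ∈ B', j ≠ i} b j x j ω + r i · x i ω'`. -/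
noncomputable def payment {Ω : Type*} [Fintype Ω] {n : ℕ}
    (x : Fin n → Ω → ℝ) (r b : Fin n → ℝ) (i : Fin n) (ω ω' : Ω) : ℝ :=
  (∑ j, if j ≠ i ∧ r j ≤ b j then b j * x j ω' else 0)
    - (∑ j, if j ≠ i ∧ r j ≤ b j then b j * x j ω else 0)
    + r i * x i ω'

/-- The utility of agent `i` with true per-unit value `vi` when she bids `β` (the other bids
being `b`), `ω` is the selected outcome for the resulting profile and `ω'` the outcome used in
the payment rule: `vi * x i ω − p_i` if she is accepted (`β ≥ r i`), and `0` otherwise. -/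
noncomputable def utility {Ω : Type*} [Fintype Ω] {n : ℕ}
    (x : Fin n → Ω → ℝ) (r : Fin n → ℝ) (vi : ℝ) (i : Fin n) (b : Fin n → ℝ) (β : ℝ)
    (ω ω' : Ω) : ℝ :=
  if r i ≤ β then vi * x i ω - payment x r (Function.update b i β) i ω ω' else 0

/-!
When agent `i` is accepted, the payment rule makes her utility `S v ω - S r ω'`, where `S` is
`surplus` below and the second term does not depend on her bid. If `r ≤ v`, truth-telling maximizes
`S v` over all outcomes and, compared with `ω'`, earns at least `(v - r) * x i ω' ≥ 0`, while a
rejected bid earns `0`. If `v < r`, then `S v ω ≤ S r ω ≤ S r ω'`, so being accepted never pays.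
-/

section Mechanism

variable {Ω : Type*} {n : ℕ} (x : Fin n → Ω → ℝ) (r b : Fin n → ℝ) (i : Fin n)

/-- The welfare of the accepted agents other than `i`, written as in `payment`. -/
noncomputable def othersWelfare (ω : Ω) : ℝ :=
  ∑ j, if j ≠ i ∧ r j ≤ b j then b j * x j ω else 0

/-- The social surplus of the outcome `ω` when agent `i` is served at value `c` per unit and the
other agents are accepted according to their bids; `c` is not compared with `r i`. -/
noncomputable def surplus (c : ℝ) (ω : Ω) : ℝ :=
  c * x i ω + othersWelfare x r b i ω

theorem othersWelfare_update_self (β : ℝ) (ω : Ω) :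
    othersWelfare x r (Function.update b i β) i ω = othersWelfare x r b i ω := by
  refine sum_congr rfl fun j _ => ?_
  by_cases hj : j = i <;> simp [hj]

variable {x i} in
theorem surplus_mono {c d : ℝ} {ω : Ω} (hx : 0 ≤ x i ω) (hcd : c ≤ d) :
    surplus x r b i c ω ≤ surplus x r b i d ω := by
  unfold surplus
  gcongr

variable [Fintype Ω]

theorem welfare_eq_add_othersWelfare (ω : Ω) :
    welfare x r b ω = (if r i ≤ b i then b i * x i ω else 0) + othersWelfare x r b i ω := by
  rw [welfare, othersWelfare, ← add_sum_erase univ _ (mem_univ i)]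
  simp only [ite_and, ← sum_filter (· ≠ i), filter_ne']

variable {i}

theorem welfare_update_of_le {β : ℝ} (hβ : r i ≤ β) (ω : Ω) :
    welfare x r (Function.update b i β) ω = surplus x r b i β ω := by
  rw [welfare_eq_add_othersWelfare x r _ i, othersWelfare_update_self, Function.update_self,
    if_pos hβ, surplus]

theorem utility_of_le (v : ℝ) {β : ℝ} (hβ : r i ≤ β) (ω ω' : Ω) :
    utility x r v i b β ω ω' = surplus x r b i v ω - surplus x r b i (r i) ω' := by
  have hpay : payment x r (Function.update b i β) i ω ω' =
      othersWelfare x r b i ω' - othersWelfare x r b i ω + r i * x i ω' := by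
    simp only [← othersWelfare_update_self x r b i β]
    rfl
  rw [utility, if_pos hβ, hpay, surplus, surplus]
  ring

theorem utility_of_lt (v : ℝ) {β : ℝ} (hβ : β < r i) (ω ω' : Ω) :
    utility x r v i b β ω ω' = 0 :=
  if_neg hβ.not_ge

variable {x r b} {v : ℝ}

theorem utility_truthful_nonneg {ωv ω' : Ω} (hx : 0 ≤ x i ω')
    (hωv : ∀ ω, welfare x r (Function.update b i v) ω ≤ welfare x r (Function.update b i v) ωv) :
    0 ≤ utility x r v i b v ωv ω' := by
  rcases lt_or_ge v (r i) with hv | hv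
  · exact (utility_of_lt x r b v hv ωv ω').ge
  · simp only [welfare_update_of_le x r b hv] at hωv
    rw [utility_of_le x r b v hv, sub_nonneg]
    exact (surplus_mono r b hx hv).trans (hωv ω')

theorem utility_nonpos_of_value_le_reserve {ω ω' : Ω} (β : ℝ) (hx : 0 ≤ x i ω) (hv : v ≤ r i)
    (hω' : ∀ ω, welfare x r (Function.update b i (r i)) ω
      ≤ welfare x r (Function.update b i (r i)) ω') :
    utility x r v i b β ω ω' ≤ 0 := by
  rcases lt_or_ge β (r i) with hβ | hβ
  · exact (utility_of_lt x r b v hβ ω ω').le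
  · simp only [welfare_update_of_le x r b le_rfl] at hω'
    rw [utility_of_le x r b v hβ, sub_nonpos]
    exact (surplus_mono r b hx hv).trans (hω' ω)

theorem utility_le_utility_truthful_of_accepted {β : ℝ} {ωv : Ω} (hv : r i ≤ v) (hβ : r i ≤ β)
    (hωv : ∀ ω, welfare x r (Function.update b i v) ω ≤ welfare x r (Function.update b i v) ωv)
    (ω ω' : Ω) :
    utility x r v i b β ω ω' ≤ utility x r v i b v ωv ω' := by
  simp only [welfare_update_of_le x r b hv] at hωv
  rw [utility_of_le x r b v hβ, utility_of_le x r b v hv]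
  exact sub_le_sub_right (hωv ω) _

theorem truthful_bidding_dominant_general {ωv ω' : Ω} (hx : ∀ ω, 0 ≤ x i ω)
    (hωv : ∀ ω, welfare x r (Function.update b i v) ω ≤ welfare x r (Function.update b i v) ωv)
    (hω' : ∀ ω, welfare x r (Function.update b i (r i)) ω
      ≤ welfare x r (Function.update b i (r i)) ω')
    (β : ℝ) (ω : Ω) :
    utility x r v i b β ω ω' ≤ utility x r v i b v ωv ω' := by
  have truthful_nonneg := utility_truthful_nonneg (hx ω') hωv
  rcases le_total v (r i) with hv | hv
  · exact (utility_nonpos_of_value_le_reserve β (hx ω) hv hω').trans truthful_nonneg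
  · rcases lt_or_ge β (r i) with hβ | hβ
    · exact (utility_of_lt x r b v hβ ω ω').trans_le truthful_nonneg
    · exact utility_le_utility_truthful_of_accepted hv hβ hωv ω ω'

end Mechanism

/-- **Truthful bidding is dominant** under the payment rule of Algorithm 3: for any bid `bi`,
any welfare-maximizing outcomes `ωv` for the truthful profile `(vi, b₋ᵢ)`, `ωb` for the
profile `(bi, b₋ᵢ)`, and `ω'` for the profile `(r i, b₋ᵢ)`, agent `i`'s utility when bidding
her true value `vi` is at least her utility when bidding `bi`. -/
theorem truthful_bidding_dominant {Ω : Type*} [Fintype Ω] [Nonempty Ω] {n : ℕ}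
    (x : Fin n → Ω → ℝ) (hx : ∀ i ω, 0 ≤ x i ω)
    (r b : Fin n → ℝ) (i : Fin n) (vi bi : ℝ)
    (ωv ωb ω' : Ω)
    (hωv : ∀ ω, welfare x r (Function.update b i vi) ω
            ≤ welfare x r (Function.update b i vi) ωv)
    (hωb : ∀ ω, welfare x r (Function.update b i bi) ω
            ≤ welfare x r (Function.update b i bi) ωb)
    (hω' : ∀ ω, welfare x r (Function.update b i (r i)) ω
            ≤ welfare x r (Function.update b i (r i)) ω') :
    utility x r vi i b bi ωb ω' ≤ utility x r vi i b vi ωv ω' :=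
  truthful_bidding_dominant_general (hx i) hωv hω' bi ωb
end

section
/- In the single-parameter environment with reserve prices and the payment rule of Algorithm 3, losers pay nothing: if agent i bids b_i ≥ r_i but receives nothing in the selected welfare-maximizing outcome ω, i.e., x_i(ω) = 0, then her payment p_i = Σ_{j ∈ B', j ≠ i} b_j x_j(ω') − Σ_{j ∈ B', j ≠ i} b_j x_j(ω) + r_i · x_i(ω') equals 0 (for any welfare-maximizing choices of ω and ω'). Agents with b_i < r_i are rejected and pay 0 by definition. -/
open Finset

/-! Changing agent `i`'s bid among accepted bids changes only the factor `β` in the welfare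
`A ω + β * a ω`, where `A` is the welfare of the others and `a` the allocation of `i`. Optimality
of `ω'` at the reserve bounds the payment of `i` below by her value for `ω` at the reserve, and
optimality of `ω` at her bid bounds it above by her value for `ω` at the bid. For a loser both
bounds are zero. -/

section PivotPayment

variable {Ω R : Type*} [Ring R] {A a : Ω → R} {ρ β : R} {ω ω' : Ω}

/-- The payment of an agent with allocation `a` and reserve `ρ` for the outcome `ω`, when `A` is the
total value of the other agents and `ω'` is the outcome selected were she to bid `ρ`: her
externality on the others, plus the reserve price of what she receives in `ω'`. -/
def pivotPayment (A a : Ω → R) (ρ : R) (ω ω' : Ω) : R :=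
  A ω' - A ω + ρ * a ω'

variable [PartialOrder R]

theorem reserve_mul_le_pivotPayment [IsOrderedAddMonoid R]
    (hω' : A ω + ρ * a ω ≤ A ω' + ρ * a ω') :
    ρ * a ω ≤ pivotPayment A a ρ ω ω' := by
  rw [pivotPayment, sub_add_eq_add_sub]
  exact le_sub_iff_add_le'.mpr hω'

variable [IsOrderedRing R]

theorem pivotPayment_le_bid_mul (hρβ : ρ ≤ β) (ha : 0 ≤ a ω')
    (hω : A ω' + β * a ω' ≤ A ω + β * a ω) :
    pivotPayment A a ρ ω ω' ≤ β * a ω := by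
  rw [pivotPayment, sub_add_eq_add_sub, sub_le_iff_le_add']
  calc
    A ω' + ρ * a ω' ≤ A ω' + β * a ω' := by gcongr
    _ ≤ A ω + β * a ω := hω

theorem losers_pay_nothing_general (hρβ : ρ ≤ β) (ha : 0 ≤ a ω')
    (hω : ∀ ω₀, A ω₀ + β * a ω₀ ≤ A ω + β * a ω)
    (hω' : ∀ ω₀, A ω₀ + ρ * a ω₀ ≤ A ω' + ρ * a ω') (hzero : a ω = 0) :
    pivotPayment A a ρ ω ω' = 0 := by
  apply le_antisymm
  · simpa [hzero] using pivotPayment_le_bid_mul hρβ ha (hω ω')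
  · simpa [hzero] using reserve_mul_le_pivotPayment (hω' ω)

end PivotPayment

section SingleParameter

variable {Ω : Type*} {n : ℕ} (x : Fin n → Ω → ℝ) (r b : Fin n → ℝ) (i : Fin n)

theorem othersWelfare_update (β : ℝ) :
    othersWelfare x r (Function.update b i β) i = othersWelfare x r b i := by
  funext ω
  refine sum_congr rfl fun j _ => ?_
  by_cases hj : j = i <;> simp [hj]

variable [Fintype Ω]

theorem payment_eq_pivotPayment (ω ω' : Ω) :
    payment x r b i ω ω' = pivotPayment (othersWelfare x r b i) (x i) (r i) ω ω' :=
  rfl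

variable {r b i} in
theorem welfare_eq_othersWelfare_add (hi : r i ≤ b i) (ω : Ω) :
    welfare x r b ω = othersWelfare x r b i ω + b i * x i ω := by
  have others : othersWelfare x r b i ω =
      ∑ j ∈ univ.erase i, if r j ≤ b j then b j * x j ω else 0 := by
    simp only [othersWelfare, ite_and, ← sum_filter, filter_ne']
  rw [others, welfare, ← sum_erase_add _ _ (mem_univ i), if_pos hi]

variable {r i} in
theorem welfare_update {β : ℝ} (hβ : r i ≤ β) (ω : Ω) :
    welfare x r (Function.update b i β) ω = othersWelfare x r b i ω + β * x i ω := by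
  rw [welfare_eq_othersWelfare_add x (i := i) (by simpa using hβ), othersWelfare_update,
    Function.update_self]

end SingleParameter

/-- **Losers pay nothing** under the payment rule of Algorithm 3: if agent `i` bids
`bi ≥ r i` but receives nothing in the selected welfare-maximizing outcome `ω`
(`x i ω = 0`), then her payment is `0`, for any welfare-maximizing choices of `ω` (for the
profile `(bi, b₋ᵢ)`) and `ω'` (for the profile `(r i, b₋ᵢ)`). -/
theorem losers_pay_nothing {Ω : Type*} [Fintype Ω] [Nonempty Ω] {n : ℕ}
    (x : Fin n → Ω → ℝ) (hx : ∀ i ω, 0 ≤ x i ω)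
    (r b : Fin n → ℝ) (i : Fin n) (bi : ℝ) (hbi : r i ≤ bi)
    (ω ω' : Ω)
    (hω : ∀ ω₀, welfare x r (Function.update b i bi) ω₀
            ≤ welfare x r (Function.update b i bi) ω)
    (hω' : ∀ ω₀, welfare x r (Function.update b i (r i)) ω₀
            ≤ welfare x r (Function.update b i (r i)) ω')
    (hzero : x i ω = 0) :
    payment x r (Function.update b i bi) i ω ω' = 0 := by
  simp only [welfare_update x b hbi, welfare_update x b le_rfl] at hω hω'
  rw [payment_eq_pivotPayment, othersWelfare_update]
  exact losers_pay_nothing_general hbi (hx i ω') hω hω' hzero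
end

section
/- In the single-parameter environment with reserve prices and the payment rule of Algorithm 3, truthful bidding is individually rational: if agent i's true value satisfies v_i ≥ r_i and she bids b_i = v_i, then for any welfare-maximizing choices of the outcomes ω and ω' her utility v_i · x_i(ω) − p_i is nonnegative; if v_i < r_i, bidding truthfully yields utility exactly 0. -/
/-!
The payment is a Clarke pivot: a truthful agent with `v i ≥ r i` is left with utility
`W_v(ω) - W_r(ω')`, where `W_β` is the welfare when she bids `β`. Since `W_β(ω')` grows with `β`
above her reserve, `W_r(ω') ≤ W_v(ω') ≤ W_v(ω)`, the last step because `ω` maximizes `W_v`.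
-/

open Finset

section Reserves

variable {Ω : Type*} {n : ℕ}

/-- The welfare of the accepted agents other than `i`, the sum `Σ_{j ∈ B', j ≠ i} b_j x_j(ω)` that
occurs twice in the payment rule. -/
noncomputable def welfareOthers (x : Fin n → Ω → ℝ) (r b : Fin n → ℝ) (i : Fin n) (ω : Ω) : ℝ :=
  ∑ j, if j ≠ i ∧ r j ≤ b j then b j * x j ω else 0

theorem welfareOthers_update (x : Fin n → Ω → ℝ) (r b : Fin n → ℝ) (i : Fin n) (β : ℝ) (ω : Ω) :
    welfareOthers x r (Function.update b i β) i ω = welfareOthers x r b i ω := by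
  refine sum_congr rfl fun j _ => ?_
  obtain rfl | hj := eq_or_ne j i
  · simp
  · rw [Function.update_of_ne hj]

variable [Fintype Ω]

theorem welfare_eq_add_welfareOthers (x : Fin n → Ω → ℝ) {r b : Fin n → ℝ} {i : Fin n}
    (hi : r i ≤ b i) (ω : Ω) :
    welfare x r b ω = b i * x i ω + welfareOthers x r b i ω := by
  have others_eq : welfareOthers x r b i ω =
      ∑ j ∈ univ.erase i, if r j ≤ b j then b j * x j ω else 0 := by
    simp only [welfareOthers, ite_and, ← sum_filter, filter_ne']
  rw [others_eq, welfare, ← add_sum_erase _ _ (mem_univ i), if_pos hi]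

theorem welfare_update_eq_add_welfareOthers (x : Fin n → Ω → ℝ) {r : Fin n → ℝ} (b : Fin n → ℝ)
    {i : Fin n} {β : ℝ} (hβ : r i ≤ β) (ω : Ω) :
    welfare x r (Function.update b i β) ω = β * x i ω + welfareOthers x r b i ω := by
  rw [welfare_eq_add_welfareOthers x (i := i) (by rwa [Function.update_self]),
    Function.update_self, welfareOthers_update]

theorem monotoneOn_welfare_update {x : Fin n → Ω → ℝ} {i : Fin n} {ω : Ω} (hx : 0 ≤ x i ω)
    (r b : Fin n → ℝ) :
    MonotoneOn (fun β => welfare x r (Function.update b i β) ω) (Set.Ici (r i)) := by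
  intro β hβ γ hγ hβγ
  simp only [welfare_update_eq_add_welfareOthers x b hβ, welfare_update_eq_add_welfareOthers x b hγ]
  gcongr

theorem payment_eq_welfare_sub_welfareOthers (x : Fin n → Ω → ℝ) (r b : Fin n → ℝ) (i : Fin n)
    (ω ω' : Ω) :
    payment x r b i ω ω' =
      welfare x r (Function.update b i (r i)) ω' - welfareOthers x r b i ω := by
  rw [welfare_update_eq_add_welfareOthers x b le_rfl, payment, welfareOthers, welfareOthers]
  ring

theorem utility_eq_welfare_sub_welfare (x : Fin n → Ω → ℝ) {r : Fin n → ℝ} (b : Fin n → ℝ)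
    {i : Fin n} {vi β : ℝ} (hvi : r i ≤ vi) (hβ : r i ≤ β) (ω ω' : Ω) :
    utility x r vi i b β ω ω' =
      welfare x r (Function.update b i vi) ω - welfare x r (Function.update b i (r i)) ω' := by
  rw [utility, if_pos hβ, payment_eq_welfare_sub_welfareOthers, Function.update_idem,
    welfareOthers_update, welfare_update_eq_add_welfareOthers x b hvi]
  ring

theorem utility_of_lt_reserve (x : Fin n → Ω → ℝ) {r : Fin n → ℝ} (vi : ℝ) {i : Fin n}
    (b : Fin n → ℝ) {β : ℝ} (hβ : β < r i) (ω ω' : Ω) : utility x r vi i b β ω ω' = 0 :=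
  if_neg hβ.not_ge

theorem truthful_individually_rational_general {x : Fin n → Ω → ℝ} (r b : Fin n → ℝ) {i : Fin n}
    (vi : ℝ) {ω ω' : Ω} (hx : 0 ≤ x i ω')
    (hω : welfare x r (Function.update b i vi) ω' ≤ welfare x r (Function.update b i vi) ω) :
    (r i ≤ vi → 0 ≤ utility x r vi i b vi ω ω') ∧
    (vi < r i → utility x r vi i b vi ω ω' = 0) := by
  refine ⟨fun hvi => ?_, fun hvi => utility_of_lt_reserve x vi b hvi ω ω'⟩
  rw [utility_eq_welfare_sub_welfare x b hvi hvi, sub_nonneg]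
  calc welfare x r (Function.update b i (r i)) ω'
      ≤ welfare x r (Function.update b i vi) ω' :=
        monotoneOn_welfare_update hx r b Set.self_mem_Ici hvi hvi
    _ ≤ welfare x r (Function.update b i vi) ω := hω

end Reserves

/-- **Individual rationality of truthful bidding** under the payment rule of Algorithm 3: for
any welfare-maximizing outcomes `ω` (for the truthful profile `(vi, b₋ᵢ)`) and `ω'` (for the
profile `(r i, b₋ᵢ)`), if `vi ≥ r i` then the truthful utility `vi * x i ω − p_i` is
nonnegative, and if `vi < r i` then the truthful utility is exactly `0`. -/
theorem truthful_individually_rational {Ω : Type*} [Fintype Ω] [Nonempty Ω] {n : ℕ}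
    (x : Fin n → Ω → ℝ) (hx : ∀ i ω, 0 ≤ x i ω)
    (r b : Fin n → ℝ) (i : Fin n) (vi : ℝ)
    (ω ω' : Ω)
    (hω : ∀ ω₀, welfare x r (Function.update b i vi) ω₀
            ≤ welfare x r (Function.update b i vi) ω)
    (hω' : ∀ ω₀, welfare x r (Function.update b i (r i)) ω₀
            ≤ welfare x r (Function.update b i (r i)) ω') :
    (r i ≤ vi → 0 ≤ utility x r vi i b vi ω ω') ∧
    (vi < r i → utility x r vi i b vi ω ω' = 0) :=
  truthful_individually_rational_general r b vi (hx i ω') (hω ω')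
end
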